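/- Suppose μ = μ' ∪ μ'' where μ' and μ'' are nonempty partitions; let k = #μ' and p = |μ'|, and assume μ' is superior to μ''. Then the following identities hold whenever the collapse on the left-hand side is defined (the collapses on the right are then also defined); moreover, in any identity whose right-hand side contains μ'⁻ and μ''⁺ one additionally assumes μ' is superior to μ''⁺. (k even, p even): μ_B = (μ')_D ∪ (μ'')_B, μ_C = (μ')_C ∪ (μ'')_C, μ_D = (μ')_D ∪ (μ'')_D. (k even, p odd): μ_B = (μ'⁻)_D ∪ (μ''⁺)_B, μ_C = (μ'⁻)_C ∪ (μ''⁺)_C, μ_D = (μ'⁻)_D ∪ (μ''⁺)_D. (k odd, p even): μ_B = (μ'⁻)_B ∪ (μ''⁺)_D, μ_C = (μ')_C ∪ (μ'')_C, μ_D = (μ'⁻)_B ∪ (μ''⁺)_B. (k odd, p odd): μ_B = (μ')_B ∪ (μ'')_D, μ_C = (μ'⁻)_C ∪ (μ''⁺)_C, μ_D = (μ')_B ∪ (μ'')_B. -/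

import Mathlib

namespace NilDual

/-- A "partition" is encoded as a multiset of natural numbers (its parts). -/
abbrev Ptn := Multiset ℕ

/-- All parts are positive. -/
def IsPartition (l : Ptn) : Prop := ∀ a ∈ l, 0 < a

/-- `height l a` is the number of parts of `l` that are ≥ `a`. -/
def height (l : Ptn) (a : ℕ) : ℕ := Multiset.card (l.filter (fun p => a ≤ p))

/-- `psum l j` is the sum of the `j` largest parts of `l`. -/
def psum (l : Ptn) (j : ℕ) : ℕ := ∑ a ∈ Finset.Icc 1 l.sum, min j (height l a)

/-- `Dom l m` means `l ≤ m` in the dominance order. -/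
def Dom (l m : Ptn) : Prop := ∀ j : ℕ, psum l j ≤ psum m j

/-- The transpose (conjugate) partition. -/
def transpose (l : Ptn) : Ptn :=
  Multiset.filter (fun x => 0 < x)
    (Multiset.map (fun a => height l a) (Finset.Icc 1 l.sum).val)

/-- The largest part (0 for the empty partition). -/
def maxPart (l : Ptn) : ℕ := l.sup

/-- The smallest part (0 for the empty partition). -/
noncomputable def minPart (l : Ptn) : ℕ := sInf {a : ℕ | a ∈ l}

/-- `λ⁺`: add 1 to the largest part. -/
def up (l : Ptn) : Ptn := (maxPart l + 1) ::ₘ l.erase (maxPart l)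

/-- `λ⁻`: subtract 1 from the smallest part, deleting it if it becomes 0. -/
noncomputable def down (l : Ptn) : Ptn :=
  if minPart l ≤ 1 then l.erase (minPart l)
  else (minPart l - 1) ::ₘ l.erase (minPart l)

/-- The join `λ ∨ μ = (λ* ∪ μ*)*`. -/
def pjoin (l m : Ptn) : Ptn := transpose (transpose l + transpose m)

/-- `λ₋ = (λ*⁻)*`. -/
noncomputable def lowerStar (l : Ptn) : Ptn := transpose (down (transpose l))

inductive PType | B | C | D
deriving DecidableEq

/-- Parts of this parity must occur with even multiplicity in a partition of type `X`. -/
def badPart : PType → ℕ → Prop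
  | PType.B, a => Even a
  | PType.C, a => Odd a
  | PType.D, a => Even a

/-- Membership in `𝒫_X` (sum unconstrained). -/
def InP (X : PType) (l : Ptn) : Prop :=
  IsPartition l ∧ ∀ a : ℕ, badPart X a → Even (l.count a)

/-- The parity of `n` required for `𝒫_X(n)` to be defined. -/
def sumParity : PType → ℕ → Prop
  | PType.B, n => Odd n
  | PType.C, n => Even n
  | PType.D, n => Even n

/-- `m` is the X-collapse of `l`: `m ∈ 𝒫_X(|l|)`, `m ≤ l` in dominance order, and `m`
dominates every member of `𝒫_X(|l|)` that is dominated by `l`. -/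
def IsCollapse (X : PType) (l m : Ptn) : Prop :=
  InP X m ∧ m.sum = l.sum ∧ Dom m l ∧
    ∀ ν : Ptn, InP X ν → ν.sum = l.sum → Dom ν l → Dom ν m

def CollapseDefined (X : PType) (l : Ptn) : Prop := ∃ m, IsCollapse X l m

open Classical in
/-- The X-collapse `λ_X` (junk value `0` if it does not exist). -/
noncomputable def collapse (X : PType) (l : Ptn) : Ptn :=
  if h : CollapseDefined X l then h.choose else 0

/-- `l` is superior to `m`: smallest part of `l` ≥ largest part of `m`. -/
def Superior (l m : Ptn) : Prop := maxPart m ≤ minPart l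

def EvenlySuperior (l m : Ptn) : Prop := ∃ k : ℕ, Even k ∧ maxPart m ≤ k ∧ k ≤ minPart l

def OddlySuperior (l m : Ptn) : Prop := ∃ k : ℕ, Odd k ∧ maxPart m ≤ k ∧ k ≤ minPart l

/-- The parity required of marked parts in type `X`. -/
def markParity : PType → ℕ → Prop
  | PType.C, a => Even a
  | _, a => Odd a

/-- `(ν, η)` is a marked partition of type `X`, with underlying partition `λ = ν + η`. -/
def IsMarked (X : PType) (nu eta : Ptn) : Prop :=
  InP X (nu + eta) ∧ sumParity X (nu + eta).sum ∧
  (∀ a ∈ nu, nu.count a = 1 ∧ markParity X a) ∧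
  ((X = PType.B ∨ X = PType.D) → Even (Multiset.card nu))

/-- The Sommers duality map `d_S` on marked partitions `(ν, η)`. -/
noncomputable def dS (X : PType) (nu eta : Ptn) : Ptn :=
  match X with
  | PType.B => collapse PType.C (transpose (nu + collapse PType.C (down eta)))
  | PType.C => collapse PType.B (transpose (nu + collapse PType.B (up eta)))
  | PType.D =>
      collapse PType.D (transpose (nu + transpose (collapse PType.D (transpose eta))))

/-- `a` is a markable part of `l` in type `X`. -/
def Markable (X : PType) (l : Ptn) (a : ℕ) : Prop :=
  a ∈ l ∧ markParity X a ∧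
    (match X with
     | PType.B => Odd (height l a)
     | PType.C => Even (height l a)
     | PType.D => Even (height l a))

/-- The marked partition `⟨l, ν⟩` is reduced. -/
def Reduced (X : PType) (l nu : Ptn) : Prop := ∀ a ∈ nu, Markable X l a

/-- The parts entering the definition of a special marked partition:
even of odd height (B), odd of even height (C), even of even height (D). -/
def AntiPart (X : PType) (l : Ptn) (a : ℕ) : Prop :=
  match X with
  | PType.B => Even a ∧ Odd (height l a)
  | PType.C => Odd a ∧ Even (height l a)
  | PType.D => Even a ∧ Even (height l a)

/-- The reduced marked partition `⟨l, ν⟩` is special. -/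
def SpecialMP (X : PType) (l nu : Ptn) : Prop :=
  ∀ a ∈ l, AntiPart X l a → Even (height nu a)

/-- `a` is the largest part of `l` whose height satisfies `P`. -/
def LargestWith (l : Ptn) (P : ℕ → Prop) (a : ℕ) : Prop :=
  a ∈ l ∧ P (height l a) ∧ ∀ b ∈ l, P (height l b) → b ≤ a

/-- Height parity for the top marked part in a basic block. -/
def heightParity : PType → ℕ → Prop
  | PType.B => fun n => Odd n
  | _ => fun n => Even n

/-- A basic block of type `X`. -/
def BasicBlock (X : PType) (nu eta : Ptn) : Prop :=
  IsMarked X nu eta ∧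
  ((∃ n1 n2 : ℕ, n1 < n2 ∧ nu = {n2, n1} ∧ n1 = minPart (nu + eta) ∧
      LargestWith (nu + eta) (heightParity X) n2) ∨
   (X = PType.C ∧ ∃ n2 : ℕ, nu = {n2} ∧ LargestWith (nu + eta) (heightParity X) n2))

/-- An ultrabasic block: a basic block with `n₁ ≤ 1`. -/
def Ultrabasic (X : PType) (nu eta : Ptn) : Prop :=
  BasicBlock X nu eta ∧ (Multiset.card nu = 2 → minPart nu ≤ 1)


/-! ### Sequence representation -/

/-- Partial sums. -/
def SS (f : ℕ → ℕ) (j : ℕ) : ℕ := ∑ i ∈ Finset.range j, f i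

lemma SS_zero (f : ℕ → ℕ) : SS f 0 = 0 := by simp [SS]

lemma SS_succ (f : ℕ → ℕ) (j : ℕ) : SS f (j+1) = SS f j + f j := by
  simp [SS, Finset.sum_range_succ]

/-- `f` lists the parts of `l` in weakly decreasing order, followed by zeros. -/
structure Rep (l : Ptn) (f : ℕ → ℕ) : Prop where
  anti : Antitone f
  h : ∀ a, 1 ≤ a → ∀ i, a ≤ f i ↔ i < height l a

lemma height_zero (a : ℕ) : height 0 a = 0 := by simp [height]

lemma height_cons (x : ℕ) (l : Ptn) (a : ℕ) :
    height (x ::ₘ l) a = height l a + if a ≤ x then 1 else 0 := by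
  unfold height
  by_cases h : a ≤ x <;> simp [h]

lemma height_add (l m : Ptn) (a : ℕ) : height (l + m) a = height l a + height m a := by
  simp [height]

lemma height_anti (l : Ptn) {a b : ℕ} (h : a ≤ b) : height l b ≤ height l a := by
  induction l using Multiset.induction_on with
  | empty => simp [height_zero]
  | cons x l ih => rw [height_cons, height_cons]; split_ifs <;> omega

lemma height_le_card (l : Ptn) (a : ℕ) : height l a ≤ Multiset.card l := by
  unfold height
  exact Multiset.card_le_card (Multiset.filter_le _ _)

lemma height_eq_card (l : Ptn) (a : ℕ) (h : ∀ x ∈ l, a ≤ x) : height l a = Multiset.card l := by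
  unfold height
  rw [Multiset.filter_eq_self.2 h]

lemma height_eq_zero (l : Ptn) (a : ℕ) (h : ∀ x ∈ l, x < a) : height l a = 0 := by
  unfold height
  rw [Multiset.filter_eq_nil.2]
  · simp
  · intro x hx; have := h x hx; omega

lemma height_count (l : Ptn) (a : ℕ) : height l a = height l (a+1) + l.count a := by
  induction l using Multiset.induction_on with
  | empty => simp [height_zero]
  | cons x l ih =>
    rw [height_cons, height_cons, Multiset.count_cons, ih]
    split_ifs <;> omega

lemma sum_eq_heights (l : Ptn) (s : ℕ) (h : ∀ x ∈ l, x ≤ s) :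
    l.sum = ∑ a ∈ Finset.Icc 1 s, height l a := by
  induction l using Multiset.induction_on with
  | empty => simp [height_zero]
  | cons x l ih =>
    rw [Multiset.sum_cons, ih (fun y hy => h y (Multiset.mem_cons_of_mem hy))]
    simp only [height_cons, Finset.sum_add_distrib]
    have hx := h x (Multiset.mem_cons_self _ _)
    have : ∑ a ∈ Finset.Icc 1 s, (if a ≤ x then 1 else 0) = x := by
      rw [← Finset.sum_filter]
      have : (Finset.Icc 1 s).filter (fun a => a ≤ x) = Finset.Icc 1 x := by
        ext a; simp; omega
      rw [this]; simp
    omega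

lemma le_sum_of_mem' (l : Ptn) : ∀ x ∈ l, x ≤ l.sum := fun _ hx => Multiset.le_sum_of_mem hx

lemma rep_le_sum {l : Ptn} {f : ℕ → ℕ} (r : Rep l f) (i : ℕ) : f i ≤ l.sum := by
  by_contra hc
  have h1 := (r.h (l.sum + 1) (by omega) i).1 (by omega)
  rw [height_eq_zero l _ (fun x hx => by have := le_sum_of_mem' l x hx; omega)] at h1
  omega

lemma rep_zero_of_card {l : Ptn} {f : ℕ → ℕ} (r : Rep l f) (i : ℕ)
    (hi : Multiset.card l ≤ i) : f i = 0 := by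
  by_contra hc
  have h1 := (r.h 1 le_rfl i).1 (by omega)
  have := height_le_card l 1
  omega

lemma psum_rep {l : Ptn} {f : ℕ → ℕ} (r : Rep l f) (j : ℕ) : psum l j = SS f j := by
  unfold psum
  induction j with
  | zero => simp [SS_zero]
  | succ j ih =>
    rw [SS_succ, ← ih]
    have key : ∀ a ∈ Finset.Icc 1 l.sum, min (j+1) (height l a) =
        min j (height l a) + if a ≤ f j then 1 else 0 := by
      intro a ha
      have h1 := r.h a (Finset.mem_Icc.1 ha).1 j
      by_cases h : a ≤ f j
      · have := h1.1 h
        simp only [h, if_true]; omega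
      · have : ¬ j < height l a := fun h' => h (h1.2 h')
        simp only [h, if_false]; omega
    rw [Finset.sum_congr rfl key, Finset.sum_add_distrib]
    congr 1
    rw [← Finset.sum_filter]
    have hle := rep_le_sum r j
    have : (Finset.Icc 1 l.sum).filter (fun a => a ≤ f j) = Finset.Icc 1 (f j) := by
      ext a; simp; omega
    rw [this]; simp

lemma sum_rep {l : Ptn} {f : ℕ → ℕ} (r : Rep l f) (N : ℕ) (hN : f N = 0) :
    SS f N = l.sum := by
  rw [← psum_rep r, sum_eq_heights l l.sum (le_sum_of_mem' l), psum]
  apply Finset.sum_congr rfl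
  intro a ha
  have ha := (Finset.mem_Icc.1 ha).1
  have := (r.h a ha N).2
  omega

lemma rep_exists (l : Ptn) : ∃ f, Rep l f := by
  refine ⟨fun i => Nat.findGreatest (fun a => a = 0 ∨ i < height l a) l.sum, ?_, ?_⟩
  · intro i j hij
    apply Nat.findGreatest_mono_left
    intro a ha
    rcases ha with ha | ha
    · exact Or.inl ha
    · exact Or.inr (by omega)
  · intro a ha i
    constructor
    · intro h
      have h2 := Nat.findGreatest_spec (P := fun a => a = 0 ∨ i < height l a) (n := l.sum)
        (Nat.zero_le _) (Or.inl rfl)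
      rcases h2 with h2 | h2
      · omega
      · exact lt_of_lt_of_le h2 (height_anti l h)
    · intro h
      apply Nat.le_findGreatest
      · by_contra hc
        rw [height_eq_zero l _ (fun x hx => by have := le_sum_of_mem' l x hx; omega)] at h
        omega
      · exact Or.inr h

lemma rep_height {l m : Ptn} {f : ℕ → ℕ} (r : Rep l f) (s : Rep m f) (a : ℕ) (ha : 1 ≤ a) :
    height l a = height m a := by
  have h1 := r.h a ha
  have h2 := s.h a ha
  apply le_antisymm
  · by_contra hc
    have := (h2 (height m a)).1 ((h1 _).2 (by omega)); omega
  · by_contra hc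
    have := (h1 (height l a)).1 ((h2 _).2 (by omega)); omega

lemma rep_ext {l m : Ptn} {f : ℕ → ℕ} (hl : IsPartition l) (hm : IsPartition m)
    (r : Rep l f) (s : Rep m f) : l = m := by
  ext a
  rcases Nat.eq_zero_or_pos a with rfl | ha
  · rw [Multiset.count_eq_zero_of_notMem, Multiset.count_eq_zero_of_notMem]
    · intro h; exact absurd (hm 0 h) (by omega)
    · intro h; exact absurd (hl 0 h) (by omega)
  · have h1 := height_count l a
    have h2 := height_count m a
    have h3 := rep_height r s a ha
    have h4 := rep_height r s (a+1) (by omega)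
    omega

lemma rep_of_fun (N : ℕ) : ∀ (f : ℕ → ℕ), Antitone f → f N = 0 →
    ∃ l, IsPartition l ∧ Rep l f := by
  induction N with
  | zero =>
    intro f hf h0
    refine ⟨0, fun a ha => absurd ha (Multiset.notMem_zero a), hf, ?_⟩
    intro a ha i
    have := hf (Nat.zero_le i)
    rw [height_zero]; omega
  | succ N ih =>
    intro f hf h0
    obtain ⟨l, hl, r⟩ := ih (fun i => f (i+1)) (fun i j h => hf (by omega)) h0
    by_cases hz : f 0 = 0
    · refine ⟨0, fun a ha => absurd ha (Multiset.notMem_zero a), hf, ?_⟩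
      intro a ha i
      have := hf (Nat.zero_le i)
      rw [height_zero]; omega
    refine ⟨f 0 ::ₘ l, ?_, hf, ?_⟩
    · intro a ha
      rcases Multiset.mem_cons.1 ha with rfl | ha
      · omega
      · exact hl a ha
    · intro a ha i
      rw [height_cons]
      have hh := r.h a ha
      try dsimp only at hh
      cases i with
      | zero =>
        have h1 := hh 0
        have := hf (Nat.zero_le 1)
        simp only [zero_add] at h1
        split_ifs <;> omega
      | succ i =>
        have h1 := hh i
        have := hf (Nat.zero_le (i+1))
        split_ifs <;> omega

lemma rep_add {l m : Ptn} {f g h : ℕ → ℕ} (r : Rep l f) (s : Rep m g) (hh : Antitone h) (k : ℕ)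
    (h1 : ∀ i, i < k → h i = f i) (h2 : ∀ i, h (k + i) = g i) (hk : f k = 0) :
    Rep (l + m) h := by
  refine ⟨hh, ?_⟩
  intro a ha i
  rw [height_add]
  have hlk : height l a ≤ k := by
    have := (r.h a ha k).2; omega
  by_cases hi : i < k
  · have e1 := r.h a ha i
    rw [h1 i hi, e1]
    constructor
    · omega
    · intro h3
      by_contra hc
      have e2 := (s.h a ha 0).2 (by omega)
      have e3 := h2 0
      have e4 := hh (show i ≤ k + 0 by omega)
      have e5 := h1 i hi
      omega
  · obtain ⟨t, rfl⟩ : ∃ t, i = k + t := ⟨i - k, by omega⟩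
    have e1 := s.h a ha t
    constructor
    · intro h3
      have e2 : height l a = k := by
        rcases Nat.eq_zero_or_pos k with hk0 | hk0
        · omega
        · have e3 := hh (show k - 1 ≤ k + t by omega)
          have e4 := h1 (k-1) (by omega)
          have e5 := (r.h a ha (k-1)).1 (by omega)
          omega
      have := h2 t
      omega
    · intro h3
      have := h2 t
      omega

/-! ### Parity description of `InP` -/

def eps : PType → ℕ
  | PType.B => 1
  | PType.C => 0
  | PType.D => 1

lemma badPart_iff (X : PType) (a : ℕ) : badPart X a ↔ Odd (a + eps X) := by
  cases X <;> simp [badPart, eps, Nat.odd_add_one]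

lemma SS_interval (f : ℕ → ℕ) (a u n : ℕ) (h : ∀ i, u ≤ i → i < u + n → f i = a) :
    SS f (u + n) = SS f u + n * a := by
  induction n with
  | zero => simp
  | succ n ih =>
    rw [← add_assoc, SS_succ, ih (fun i h1 h2 => h i h1 (by omega)), h (u+n) (by omega) (by omega)]
    ring

lemma EE_step {l : Ptn} {f : ℕ → ℕ} (r : Rep l f) (e a : ℕ) (ha : 1 ≤ a) :
    SS f (height l a) + e * height l a =
      (SS f (height l (a+1)) + e * height l (a+1)) + l.count a * (a + e) := by
  have h1 := height_count l a
  rw [h1, SS_interval f a]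
  · ring
  · intro i hi1 hi2
    have e1 := (r.h a ha i).2 (by omega)
    have e2 := (r.h (a+1) (by omega) i).1
    omega

lemma inP_rep {X : PType} {l : Ptn} {f : ℕ → ℕ} (hl : IsPartition l) (r : Rep l f) :
    InP X l ↔ ∀ j, f (j+1) < f j → Even (SS f (j+1) + eps X * (j+1)) := by
  have A : InP X l ↔ ∀ a, 1 ≤ a → Even (SS f (height l a) + eps X * height l a) := by
    constructor
    · rintro ⟨-, h⟩
      have key : ∀ n a, 1 ≤ a → l.sum < a + n →
          Even (SS f (height l a) + eps X * height l a) := by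
        intro n
        induction n with
        | zero =>
          intro a ha hs
          rw [height_eq_zero l _ (fun x hx => by have := le_sum_of_mem' l x hx; omega)]
          simp [SS_zero]
        | succ n ih =>
          intro a ha hs
          rw [EE_step r _ a ha]
          apply (ih (a+1) (by omega) (by omega)).add
          by_cases hb : badPart X a
          · exact (h a hb).mul_right _
          · rw [badPart_iff, Nat.not_odd_iff_even] at hb
            exact hb.mul_left _
      intro a ha
      exact key (l.sum + 1) a ha (by omega)
    · intro h
      refine ⟨hl, fun a hb => ?_⟩
      rcases Nat.eq_zero_or_pos a with rfl | ha
      · rw [Multiset.count_eq_zero_of_notMem (fun h => absurd (hl 0 h) (by omega))]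
        exact Even.zero
      · have h1 := h a ha
        have h2 := h (a+1) (by omega)
        rw [EE_step r _ a ha, Nat.even_add] at h1
        have h3 := h1.1 h2
        rw [badPart_iff] at hb
        rw [Nat.even_mul] at h3
        rcases h3 with h3 | h3
        · exact h3
        · exact absurd hb (Nat.not_odd_iff_even.2 h3)
  rw [A]
  constructor
  · intro h j hj
    have h1 := (r.h (f j) (by omega) j).1 le_rfl
    have h2 := (r.h (f j) (by omega) (j+1)).2
    have h3 : height l (f j) = j + 1 := by omega
    have := h (f j) (by omega)
    rwa [h3] at this
  · intro h a ha
    rcases hH : height l a with _ | j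
    · simp [SS_zero]
    · apply h
      have h1 := (r.h a ha j).2 (by omega)
      have h2 := (r.h a ha (j+1)).1
      omega

/-! ### The explicit collapse -/

open Classical in
/-- The defect: 1 where the partial sum must drop. -/
noncomputable def dd (e : ℕ) (f : ℕ → ℕ) (j : ℕ) : ℕ :=
  if Odd (SS f j + e * j) ∧ (f j < f (j-1) ∨ Even (f j + e)) then 1 else 0

lemma dd_le (e : ℕ) (f : ℕ → ℕ) (j : ℕ) : dd e f j ≤ 1 := by
  unfold dd; split_ifs <;> omega

lemma dd_eq_one {e : ℕ} {f : ℕ → ℕ} {j : ℕ} :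
    dd e f j = 1 ↔ Odd (SS f j + e * j) ∧ (f j < f (j-1) ∨ Even (f j + e)) := by
  unfold dd; split_ifs with h <;> simp [h]

lemma dd_eq_zero {e : ℕ} {f : ℕ → ℕ} {j : ℕ} :
    dd e f j = 0 ↔ ¬ (Odd (SS f j + e * j) ∧ (f j < f (j-1) ∨ Even (f j + e))) := by
  unfold dd; split_ifs with h <;> simp [h]

lemma dd_zero (e : ℕ) (f : ℕ → ℕ) : dd e f 0 = 0 := by
  rw [dd_eq_zero]; simp [SS_zero]

lemma tau_succ (e : ℕ) (f : ℕ → ℕ) (j : ℕ) :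
    SS f (j+1) + e * (j+1) = (SS f j + e * j) + (f j + e) := by
  rw [SS_succ]; ring

/-- Eventually the defect vanishes. -/
lemma dd_large {e : ℕ} {f : ℕ → ℕ} {N : ℕ} (hf : Antitone f) (hN : f N = 0)
    (hp : e = 1 ∨ (e = 0 ∧ Even (SS f N))) (j : ℕ) (hj : N < j) : dd e f j = 0 := by
  rw [dd_eq_zero]
  have h1 := hf (show N ≤ j by omega)
  have h2 := hf (show N ≤ j - 1 by omega)
  rintro ⟨ho, h | h⟩
  · omega
  · have h3 : f j = 0 := by omega
    rcases hp with rfl | ⟨rfl, hp⟩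
    · simp [h3] at h
    · have : SS f j = SS f N := by
        have := SS_interval f 0 N (j - N) (fun i hi _ => by have := hf hi; omega)
        rw [show N + (j - N) = j by omega] at this
        omega
      rw [zero_mul, add_zero, this] at ho
      exact absurd hp (Nat.not_even_iff_odd.2 ho)

lemma max_aux {e : ℕ} {f h : ℕ → ℕ} {N : ℕ} (hf : Antitone f) (hN : f N = 0)
    (hp : e = 1 ∨ (e = 0 ∧ Even (SS f N))) (hh : Antitone h)
    (hP : ∀ j, h (j+1) < h j → Even (SS h (j+1) + e * (j+1)))
    (hd : ∀ j, SS h j ≤ SS f j) :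
    ∀ n j, N < j + n → SS h j = SS f j → dd e f j = 1 → False := by
  intro n
  induction n with
  | zero =>
    intro j hj _ h1
    rw [dd_large hf hN hp j (by omega)] at h1
    omega
  | succ n ih =>
    intro j hj hS h1
    cases j with
    | zero => rw [dd_zero] at h1; omega
    | succ j =>
      have a1 := hd j
      have a2 := hd (j+1+1)
      have a3 := SS_succ h j
      have a4 := SS_succ f j
      have a5 := SS_succ h (j+1)
      have a6 := SS_succ f (j+1)
      have a7 := hf (show j ≤ j+1 by omega)
      have a8 := hh (show j ≤ j+1 by omega)
      have a9 := hf (show j+1 ≤ j+1+1 by omega)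
      obtain ⟨b1, b2⟩ := dd_eq_one.1 h1
      have b3 : ¬ h (j+1) < h j := by
        intro hc
        have := hP j hc
        rw [hS] at this
        exact absurd this (Nat.not_even_iff_odd.2 b1)
      simp only [Nat.add_sub_cancel] at b2
      have b4 : Even (f (j+1) + e) := by
        rcases b2 with b2 | b2
        · omega
        · exact b2
      refine ih (j+1+1) (by omega) (by omega) (dd_eq_one.2 ⟨?_, ?_⟩)
      · rw [tau_succ]; exact b1.add_even b4
      · simp only [Nat.add_sub_cancel]
        rcases Nat.lt_or_ge (f (j+1+1)) (f (j+1)) with h' | h'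
        · exact Or.inl h'
        · right; rwa [show f (j+1+1) = f (j+1) by omega]

lemma conc_aux {e : ℕ} {f : ℕ → ℕ} (hf : Antitone f) (j : ℕ) :
    f (j+1) + 2 * dd e f (j+1) ≤ f j + dd e f j + dd e f (j+1+1) := by
  have a7 := hf (show j ≤ j+1 by omega)
  have a8 := hf (show j+1 ≤ j+1+1 by omega)
  have a9 := hf (show j-1 ≤ j by omega)
  have c := dd_le e f (j+1)
  rcases Nat.eq_zero_or_pos (dd e f (j+1)) with h0 | h0
  · omega
  have h1 : dd e f (j+1) = 1 := by omega
  obtain ⟨b1, b2⟩ := dd_eq_one.1 h1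
  simp only [Nat.add_sub_cancel] at b2
  have up1 : Even (f (j+1) + e) → dd e f (j+1+1) = 1 := by
    intro b4
    refine dd_eq_one.2 ⟨?_, ?_⟩
    · rw [tau_succ]; exact b1.add_even b4
    · simp only [Nat.add_sub_cancel]
      rcases Nat.lt_or_ge (f (j+1+1)) (f (j+1)) with h' | h'
      · exact Or.inl h'
      · right; rwa [show f (j+1+1) = f (j+1) by omega]
  have dn1 : Even (f j + e) → dd e f j = 1 := by
    intro b4
    refine dd_eq_one.2 ⟨?_, Or.inr b4⟩
    rw [tau_succ, Nat.odd_add] at b1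
    exact b1.2 b4
  rcases Nat.lt_or_ge (f (j+1) + 1) (f j) with g1 | g1
  · omega
  rcases Nat.lt_or_ge (f (j+1)) (f j) with g2 | g2
  · have g3 : f j = f (j+1) + 1 := by omega
    by_cases ev : Even (f (j+1) + e)
    · have := up1 ev; omega
    · have : Even (f j + e) := by
        rw [g3, show f (j+1) + 1 + e = f (j+1) + e + 1 by omega]
        exact Nat.even_add_one.2 ev
      have := dn1 this; omega
  · have g3 : f j = f (j+1) := by omega
    have ev : Even (f (j+1) + e) := by
      rcases b2 with b2 | b2
      · omega
      · exact b2
    have := up1 ev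
    have := dn1 (g3 ▸ ev)
    omega

lemma nonneg_aux {e : ℕ} {f : ℕ → ℕ} {N : ℕ} (hf : Antitone f) (hN : f N = 0)
    (hp : e = 1 ∨ (e = 0 ∧ Even (SS f N))) (j : ℕ) : dd e f (j+1) ≤ f j + dd e f j := by
  -- the shifted differences are antitone and eventually zero
  have key : ∀ n j, N < j + n → dd e f (j+1) ≤ f j + dd e f j := by
    intro n
    induction n with
    | zero =>
      intro j hj
      rw [dd_large hf hN hp (j+1) (by omega)]; omega
    | succ n ih =>
      intro j hj
      have := ih (j+1) (by omega)
      have := conc_aux (e := e) hf j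
      omega
  exact key (N+1) j (by omega)

lemma fun_collapse {e : ℕ} {f : ℕ → ℕ} {N : ℕ} (hf : Antitone f) (hN : f N = 0)
    (hp : e = 1 ∨ (e = 0 ∧ Even (SS f N))) :
    ∃ g : ℕ → ℕ, Antitone g ∧ g (N+1) = 0 ∧ (∀ j, SS g j + dd e f j = SS f j) ∧
      (∀ j, g (j+1) < g j → Even (SS g (j+1) + e * (j+1))) := by
  have nn := nonneg_aux hf hN hp
  refine ⟨fun j => f j + dd e f j - dd e f (j+1), ?_, ?_, ?_, ?_⟩
  · apply antitone_nat_of_succ_le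
    intro j
    have := conc_aux (e := e) hf j
    have := nn j
    have := nn (j+1)
    omega
  · have h1 := dd_large hf hN hp (N+1) (by omega)
    have h2 := hf (show N ≤ N+1 by omega)
    try dsimp only
    omega
  · intro j
    induction j with
    | zero => rw [dd_zero]; simp [SS_zero]
    | succ j ih =>
      rw [SS_succ, SS_succ]
      have := nn j
      try dsimp only
      omega
  · intro j hj
    have hS : SS (fun j => f j + dd e f j - dd e f (j+1)) (j+1) + dd e f (j+1) = SS f (j+1) := by
      generalize j+1 = j
      induction j with
      | zero => rw [dd_zero]; simp [SS_zero]
      | succ j ih =>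
        rw [SS_succ, SS_succ]
        have := nn j
        try dsimp only
        omega
    by_contra hodd
    rw [Nat.not_even_iff_odd] at hodd
    have c := dd_le e f (j+1)
    rcases Nat.eq_zero_or_pos (dd e f (j+1)) with h0 | h0
    · have b1 : Odd (SS f (j+1) + e * (j+1)) := by
        rw [← hS, h0]; exact hodd
      have b2 := dd_eq_zero.1 h0
      have b3 : ¬ (f (j+1) < f j ∨ Even (f (j+1) + e)) := fun h => b2 ⟨b1, h⟩
      have a7 := hf (show j ≤ j+1 by omega)
      have b4 : f (j+1) = f j := by
        by_contra h; exact b3 (Or.inl (by omega))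
      have b5 : Odd (f (j+1) + e) := by
        rw [← Nat.not_even_iff_odd]; exact fun h => b3 (Or.inr h)
      have b6 : dd e f j = 0 := by
        rw [dd_eq_zero]; rintro ⟨h, -⟩
        rw [tau_succ, Nat.odd_add] at b1
        have := b1.1 h
        rw [← b4] at this
        exact absurd this (Nat.not_even_iff_odd.2 b5)
      have b7 : dd e f (j+1+1) = 0 := by
        rw [dd_eq_zero]; rintro ⟨h, -⟩
        rw [tau_succ] at h
        exact absurd (b1.add_odd b5) (Nat.not_even_iff_odd.2 h)
      try dsimp only at hj
      omega
    · have h1 : dd e f (j+1) = 1 := by omega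
      have b1 := (dd_eq_one.1 h1).1
      rw [← hS, h1] at b1
      rw [show ∀ x y : ℕ, x + 1 + y = x + y + 1 by intros; omega] at b1
      rw [Nat.odd_add_one] at b1
      exact b1 hodd

lemma collapse_spec {X : PType} {l : Ptn} {f : ℕ → ℕ} (r : Rep l f)
    (hp : eps X = 1 ∨ (eps X = 0 ∧ Even l.sum)) :
    ∃ m g, IsCollapse X l m ∧ Rep m g ∧ ∀ j, SS g j + dd (eps X) f j = SS f j := by
  set N := Multiset.card l with hNdef
  have hN : f N = 0 := rep_zero_of_card r N le_rfl
  have hsum := sum_rep r N hN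
  rw [← hsum] at hp
  obtain ⟨g, g1, g2, g3, g4⟩ := fun_collapse r.anti hN hp
  obtain ⟨m, hm, s⟩ := rep_of_fun (N+1) g g1 g2
  refine ⟨m, g, ⟨(inP_rep hm s).2 g4, ?_, ?_, ?_⟩, s, g3⟩
  · rw [← sum_rep s _ g2]
    have := g3 (N+1)
    rw [dd_large r.anti hN hp (N+1) (by omega), SS_succ f N, hN] at this
    omega
  · intro j
    rw [psum_rep s, psum_rep r]
    have := g3 j; omega
  · intro ν hν hs hdom j
    obtain ⟨h, t⟩ := rep_exists ν
    have hd : ∀ j, SS h j ≤ SS f j := by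
      intro j
      have := hdom j
      rwa [psum_rep t, psum_rep r] at this
    rw [psum_rep t, psum_rep s]
    have c := dd_le (eps X) f j
    have c1 := g3 j
    have c2 := hd j
    by_contra hc
    exact max_aux r.anti hN hp t.anti ((inP_rep hν.1 t).1 hν) hd (N+1) j (by omega)
      (by omega) (by omega)

lemma dom_antisymm {l m : Ptn} (hl : IsPartition l) (hm : IsPartition m)
    (h1 : Dom l m) (h2 : Dom m l) : l = m := by
  obtain ⟨f, r⟩ := rep_exists l
  obtain ⟨g, s⟩ := rep_exists m
  have : f = g := by
    funext j
    have e : ∀ j, SS f j = SS g j := by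
      intro j
      rw [← psum_rep r, ← psum_rep s]
      exact le_antisymm (h1 j) (h2 j)
    have e1 := e j
    have e2 := e (j+1)
    rw [SS_succ, SS_succ] at e2
    omega
  subst this
  exact rep_ext hl hm r s

lemma collapse_eq {X : PType} {l m : Ptn} (h : IsCollapse X l m) : collapse X l = m := by
  have hd : CollapseDefined X l := ⟨m, h⟩
  unfold collapse
  rw [dif_pos hd]
  have h' := hd.choose_spec
  exact dom_antisymm h'.1.1 h.1.1 (h.2.2.2 _ h'.1 h'.2.1 h'.2.2.1)
    (h'.2.2.2 _ h.1 h.2.1 h.2.2.1)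

lemma parity_of_defined {X : PType} {l : Ptn} (h : CollapseDefined X l) :
    eps X = 1 ∨ (eps X = 0 ∧ Even l.sum) := by
  obtain ⟨m, hP, hs, -⟩ := h
  cases X with
  | B => exact Or.inl rfl
  | D => exact Or.inl rfl
  | C =>
    refine Or.inr ⟨rfl, ?_⟩
    rw [← hs]
    obtain ⟨f, r⟩ := rep_exists m
    have hc := (inP_rep hP.1 r).1 hP
    have h0 := rep_zero_of_card r (Multiset.card m) le_rfl
    rw [← sum_rep r _ h0]
    have key : ∀ n, Even (SS f n) ∨ 0 < f n := by
      intro n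
      induction n with
      | zero => left; simp [SS_zero]
      | succ n ih =>
        by_contra hcon
        push Not at hcon
        obtain ⟨h1, h2⟩ := hcon
        rcases Nat.eq_zero_or_pos (f n) with h3 | h3
        · rcases ih with ih | ih
          · rw [SS_succ, h3, add_zero] at h1; exact h1 ih
          · omega
        · have := hc n (by omega)
          simp only [eps, zero_mul, add_zero] at this
          exact h1 this
    rcases key (Multiset.card m) with h | h
    · exact h
    · omega

lemma core {X Y Z : PType} (hY : eps Y = eps X) (hZ : eps Z = eps X)
    {n1 n2 mu : Ptn} {f1 f2 F : ℕ → ℕ} {k : ℕ} (r1 : Rep n1 f1) (r2 : Rep n2 f2) (r : Rep mu F)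
    (hsum : n1.sum + n2.sum = mu.sum)
    (hk : f1 k = 0) (hev : Even (SS f1 k + eps X * k))
    (hA : ∀ j, j ≤ k → SS F j + dd (eps X) f1 j = SS f1 j + dd (eps X) F j)
    (hB : ∀ j, SS F (k+j) + dd (eps X) f2 j = SS f1 k + SS f2 j + dd (eps X) F (k+j))
    (hdef : CollapseDefined X mu) :
    CollapseDefined Y n1 ∧ CollapseDefined Z n2 ∧ collapse X mu = collapse Y n1 + collapse Z n2 := by
  have p := parity_of_defined hdef
  have p1 : eps Y = 1 ∨ (eps Y = 0 ∧ Even n1.sum) := by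
    rw [hY]
    rcases p with p | ⟨p, -⟩
    · exact Or.inl p
    · refine Or.inr ⟨p, ?_⟩
      rw [← sum_rep r1 k hk]
      simpa [p] using hev
  have p2 : eps Z = 1 ∨ (eps Z = 0 ∧ Even n2.sum) := by
    rw [hZ]
    rcases p with p | ⟨p, pe⟩
    · exact Or.inl p
    · refine Or.inr ⟨p, ?_⟩
      rcases p1 with p1 | ⟨-, p1⟩
      · omega
      · rw [← hsum, Nat.even_add] at pe
        exact pe.1 p1
  obtain ⟨c, g, hc, s, q⟩ := collapse_spec r p
  obtain ⟨c1, g1, hc1, s1, q1⟩ := collapse_spec r1 p1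
  obtain ⟨c2, g2, hc2, s2, q2⟩ := collapse_spec r2 p2
  refine ⟨⟨c1, hc1⟩, ⟨c2, hc2⟩, ?_⟩
  rw [collapse_eq hc, collapse_eq hc1, collapse_eq hc2]
  rw [hY] at q1
  rw [hZ] at q2
  have pk : eps X = 1 ∨ (eps X = 0 ∧ Even (SS f1 k)) := by
    rw [hY] at p1; rwa [sum_rep r1 k hk]
  have dk : dd (eps X) f1 k = 0 := by
    rw [dd_eq_zero]; rintro ⟨h, -⟩
    exact absurd hev (Nat.not_even_iff_odd.2 h)
  have dk1 : dd (eps X) f1 (k+1) = 0 := dd_large r1.anti hk pk (k+1) (by omega)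
  have E1 : ∀ j, j ≤ k → SS g j = SS g1 j := by
    intro j hj
    have := hA j hj
    have := q j
    have := q1 j
    omega
  have E0 := q1 k
  have E2 : ∀ j, SS g (k+j) = SS g1 k + SS g2 j := by
    intro j
    have := hB j
    have := q (k+j)
    have := q2 j
    omega
  have hg1 : g1 k = 0 := by
    have h1 := q1 (k+1)
    rw [SS_succ, SS_succ, hk] at h1
    omega
  refine rep_ext hc.1.1 ?_ s (rep_add s1 s2 s.anti k ?_ ?_ hg1)
  · intro a ha
    rcases Multiset.mem_add.1 ha with h | h
    · exact hc1.1.1 a h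
    · exact hc2.1.1 a h
  · intro i hi
    have h1 := E1 i (by omega)
    have h2 := E1 (i+1) (by omega)
    rw [SS_succ, SS_succ] at h2
    omega
  · intro i
    have h1 := E2 i
    have h2 := E2 (i+1)
    rw [← add_assoc, SS_succ, SS_succ] at h2
    omega

/-! ### Concrete pieces -/

lemma maxPart_mem {m : Ptn} (h : m ≠ 0) : maxPart m ∈ m := by
  unfold maxPart
  induction m using Multiset.induction_on with
  | empty => exact absurd rfl h
  | cons x l ih =>
    rw [Multiset.sup_cons]
    by_cases hl : l = 0
    · subst hl; simp
    · have := ih hl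
      rcases le_total x l.sup with h1 | h1
      · rw [sup_eq_right.2 h1]; exact Multiset.mem_cons_of_mem this
      · rw [sup_eq_left.2 h1]; exact Multiset.mem_cons_self _ _

lemma le_maxPart {m : Ptn} {a : ℕ} (h : a ∈ m) : a ≤ maxPart m := Multiset.le_sup h

lemma minPart_mem {m : Ptn} (h : m ≠ 0) : minPart m ∈ m := by
  obtain ⟨a, ha⟩ := Multiset.exists_mem_of_ne_zero h
  exact Nat.sInf_mem (s := {a : ℕ | a ∈ m}) ⟨a, ha⟩

lemma minPart_le {m : Ptn} {a : ℕ} (h : a ∈ m) : minPart m ≤ a :=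
  Nat.sInf_le (s := {a : ℕ | a ∈ m}) h

lemma rep_max {m : Ptn} {f : ℕ → ℕ} (hm : IsPartition m) (h : m ≠ 0) (r : Rep m f) :
    f 0 = maxPart m := by
  have h1 := maxPart_mem h
  have h2 := hm _ h1
  apply le_antisymm
  · by_contra hc
    have := (r.h (maxPart m + 1) (by omega) 0).1 (by omega)
    rw [height_eq_zero m _ (fun x hx => by have := le_maxPart hx; omega)] at this
    omega
  · rw [r.h _ h2]
    rw [← Multiset.cons_erase h1, height_cons, Multiset.cons_erase h1]
    simp

lemma rep_min {m : Ptn} {f : ℕ → ℕ} (hm : IsPartition m) (h : m ≠ 0) (r : Rep m f) :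
    f (Multiset.card m - 1) = minPart m := by
  have h1 := minPart_mem h
  have h2 := hm _ h1
  have h0 := Multiset.card_pos.2 h
  apply le_antisymm
  · by_contra hc
    have h3 := (r.h (minPart m + 1) (by omega) (Multiset.card m - 1)).1 (by omega)
    have h4 := height_count m (minPart m)
    have h5 := height_le_card m (minPart m)
    have h6 := Multiset.count_pos.2 h1
    omega
  · rw [r.h _ h2, height_eq_card m _ (fun x hx => minPart_le hx)]
    omega

lemma up_rep {m : Ptn} {f : ℕ → ℕ} (hm : IsPartition m) (h : m ≠ 0) (r : Rep m f) :
    Rep (up m) (fun i => if i = 0 then f 0 + 1 else f i) := by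
  have h1 := maxPart_mem h
  have h2 := rep_max hm h r
  constructor
  · intro i j hij
    have a1 := r.anti hij
    have a2 := r.anti (Nat.zero_le j)
    try dsimp only
    split_ifs <;> first | omega | (subst_vars; omega)
  · intro a ha i
    have e : height (up m) a + (if a ≤ maxPart m then 1 else 0) =
        height m a + (if a ≤ maxPart m + 1 then 1 else 0) := by
      rw [up, height_cons]
      have e' : height m a = height (m.erase (maxPart m)) a + if a ≤ maxPart m then 1 else 0 := by
        conv_lhs => rw [← Multiset.cons_erase h1, height_cons]
      omega
    have b1 := r.h a ha i
    have b2 := r.h a ha 0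
    have b3 := r.anti (Nat.zero_le i)
    try dsimp only
    split_ifs at e ⊢ <;> first | omega | (subst_vars; omega)

lemma down_rep {m : Ptn} {f : ℕ → ℕ} (hm : IsPartition m) (h : m ≠ 0) (r : Rep m f)
    (h2 : 2 ≤ minPart m) :
    Rep (down m) (fun i => if i = Multiset.card m - 1 then f i - 1 else f i) := by
  have h1 := minPart_mem h
  have h3 := rep_min hm h r
  have h0 := Multiset.card_pos.2 h
  have hz := rep_zero_of_card r
  constructor
  · intro i j hij
    have a1 := r.anti hij
    have a2 := hz j
    try dsimp only
    split_ifs with c1 c2 c2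
    · omega
    · omega
    · have := a2 (by omega); omega
    · omega
  · intro a ha i
    have e : height (down m) a + (if a ≤ minPart m then 1 else 0) =
        height m a + (if a ≤ minPart m - 1 then 1 else 0) := by
      rw [down, if_neg (by omega), height_cons]
      have e' : height m a = height (m.erase (minPart m)) a + if a ≤ minPart m then 1 else 0 := by
        conv_lhs => rw [← Multiset.cons_erase h1, height_cons]
      omega
    have b1 := r.h a ha i
    have b2 := r.h a ha (Multiset.card m - 1)
    have b3 := hz i
    have b4 := height_le_card m a
    try dsimp only
    by_cases hi : i = Multiset.card m - 1
    · subst hi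
      rw [if_pos rfl]
      split_ifs at e <;> omega
    · rw [if_neg hi]
      by_cases hi2 : Multiset.card m ≤ i
      · have := b3 hi2
        split_ifs at e <;> omega
      · have b5 := r.anti (show i ≤ Multiset.card m - 1 by omega)
        split_ifs at e <;> omega

lemma up_sum {m : Ptn} (h : m ≠ 0) : (up m).sum = m.sum + 1 := by
  have h1 := maxPart_mem h
  rw [up, Multiset.sum_cons]
  conv_rhs => rw [← Multiset.cons_erase h1, Multiset.sum_cons]
  omega

lemma down_sum {m : Ptn} (h : m ≠ 0) (h2 : 2 ≤ minPart m) : (down m).sum + 1 = m.sum := by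
  have h1 := minPart_mem h
  rw [down, if_neg (by omega), Multiset.sum_cons]
  conv_rhs => rw [← Multiset.cons_erase h1, Multiset.sum_cons]
  omega

lemma maxPart_up {m : Ptn} : maxPart m + 1 ≤ maxPart (up m) :=
  le_maxPart (by rw [up]; exact Multiset.mem_cons_self _ _)

/-- Concatenation. -/
def cat (k : ℕ) (f g : ℕ → ℕ) (i : ℕ) : ℕ := if i < k then f i else g (i - k)

lemma SS_congr {f g : ℕ → ℕ} (j : ℕ) (h : ∀ i, i < j → f i = g i) : SS f j = SS g j := by
  unfold SS
  exact Finset.sum_congr rfl (fun i hi => h i (Finset.mem_range.1 hi))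

lemma SS_cat_le (k : ℕ) (f g : ℕ → ℕ) (j : ℕ) (h : j ≤ k) : SS (cat k f g) j = SS f j :=
  SS_congr j (fun i hi => by simp [cat, show i < k by omega])

lemma cat_add (k : ℕ) (f g : ℕ → ℕ) (j : ℕ) : cat k f g (k + j) = g j := by simp [cat]

lemma SS_cat_add (k : ℕ) (f g : ℕ → ℕ) (j : ℕ) :
    SS (cat k f g) (k + j) = SS f k + SS g j := by
  induction j with
  | zero => simp [SS_zero, SS_cat_le]
  | succ j ih => rw [← add_assoc, SS_succ, SS_succ, ih, cat_add]; omega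

lemma rep_cat {m1 m2 : Ptn} {f1 f2 : ℕ → ℕ} (h1 : IsPartition m1) (h2 : IsPartition m2)
    (hne1 : m1 ≠ 0) (hne2 : m2 ≠ 0) (r1 : Rep m1 f1) (r2 : Rep m2 f2)
    (hsup : Superior m1 m2) : Rep (m1 + m2) (cat (Multiset.card m1) f1 f2) := by
  have a1 := rep_min h1 hne1 r1
  have a2 := rep_max h2 hne2 r2
  unfold Superior at hsup
  refine rep_add r1 r2 ?_ (Multiset.card m1) ?_ ?_ (rep_zero_of_card r1 _ le_rfl)
  · intro i j hij
    unfold cat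
    split_ifs with c1 c2 c2
    · exact r1.anti hij
    · omega
    · have b1 := r1.anti (show i ≤ Multiset.card m1 - 1 by omega)
      have b2 := r2.anti (Nat.zero_le (j - Multiset.card m1))
      omega
    · exact r2.anti (by omega)
  · intro i hi; simp [cat, hi]
  · intro i; exact cat_add _ _ _ _

lemma dd_congr {e : ℕ} {f g : ℕ → ℕ} {i j : ℕ}
    (h1 : Odd (SS f i + e * i) ↔ Odd (SS g j + e * j))
    (h2 : Odd (SS f i + e * i) →
      ((f i < f (i-1) ∨ Even (f i + e)) ↔ (g j < g (j-1) ∨ Even (g j + e)))) :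
    dd e f i = dd e g j := by
  unfold dd
  congr 1
  apply propext
  constructor
  · rintro ⟨a, b⟩; exact ⟨h1.1 a, (h2 a).1 b⟩
  · rintro ⟨a, b⟩; exact ⟨h1.2 a, (h2 (h1.2 a)).2 b⟩

/-- Case where the union splits directly. -/
lemma split_case {X Y Z : PType} (hY : eps Y = eps X) (hZ : eps Z = eps X)
    {m1 m2 : Ptn} (h1 : IsPartition m1) (h2 : IsPartition m2) (hne1 : m1 ≠ 0) (hne2 : m2 ≠ 0)
    (hsup : Superior m1 m2) (hev : Even (m1.sum + eps X * Multiset.card m1))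
    (hdef : CollapseDefined X (m1 + m2)) :
    CollapseDefined Y m1 ∧ CollapseDefined Z m2 ∧
      collapse X (m1 + m2) = collapse Y m1 + collapse Z m2 := by
  obtain ⟨f1, r1⟩ := rep_exists m1
  obtain ⟨f2, r2⟩ := rep_exists m2
  have r := rep_cat h1 h2 hne1 hne2 r1 r2 hsup
  have hk := rep_zero_of_card r1 (Multiset.card m1) le_rfl
  rw [← sum_rep r1 _ hk] at hev
  generalize Multiset.card m1 = k at *
  refine core hY hZ r1 r2 r (by simp) hk hev ?_ ?_ hdef
  · intro j hj
    rw [SS_cat_le k f1 f2 j hj]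
    congr 1
    apply dd_congr
    · rw [SS_cat_le k f1 f2 j hj]
    · intro ho
      have hjk : j < k := by
        rcases Nat.lt_or_ge j k with h | h
        · exact h
        · rw [show j = k by omega] at ho
          exact absurd hev (Nat.not_even_iff_odd.2 ho)
      simp [cat, hjk, show j - 1 < k by omega]
  · intro j
    rw [SS_cat_add]
    congr 1
    have hpar : Odd (SS f2 j + eps X * j) ↔
        Odd (SS (cat k f1 f2) (k + j) + eps X * (k + j)) := by
      rw [SS_cat_add, show SS f1 k + SS f2 j + eps X * (k + j) =
        (SS f2 j + eps X * j) + (SS f1 k + eps X * k) by ring,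
        Nat.odd_add (m := SS f2 j + eps X * j)]
      exact ⟨fun h => ⟨fun _ => hev, fun _ => h⟩, fun h => h.2 hev⟩
    apply dd_congr hpar
    intro ho
    cases j with
    | zero => simp [SS_zero] at ho
    | succ j =>
      rw [cat_add, show k + (j+1) - 1 = k + j by omega, cat_add, Nat.add_sub_cancel]

/-- Case where one box moves. -/
lemma move_case {X Y Z : PType} (hY : eps Y = eps X) (hZ : eps Z = eps X)
    {m1 m2 : Ptn} (h1 : IsPartition m1) (h2 : IsPartition m2) (hne1 : m1 ≠ 0) (hne2 : m2 ≠ 0)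
    (hsup : Superior m1 m2) (hsup' : Superior m1 (up m2))
    (hodd : Odd (m1.sum + eps X * Multiset.card m1))
    (hdef : CollapseDefined X (m1 + m2)) :
    CollapseDefined Y (down m1) ∧ CollapseDefined Z (up m2) ∧
      collapse X (m1 + m2) = collapse Y (down m1) + collapse Z (up m2) := by
  obtain ⟨f1, r1⟩ := rep_exists m1
  obtain ⟨f2, r2⟩ := rep_exists m2
  have r := rep_cat h1 h2 hne1 hne2 r1 r2 hsup
  have hk := rep_zero_of_card r1 (Multiset.card m1) le_rfl
  have hmin := rep_min h1 hne1 r1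
  have hmax := rep_max h2 hne2 r2
  have hmp := h2 _ (maxPart_mem hne2)
  have hmu := maxPart_up (m := m2)
  unfold Superior at hsup'
  have hmin2 : 2 ≤ minPart m1 := by omega
  have u1 := down_rep h1 hne1 r1 hmin2
  have u2 := up_rep h2 hne2 r2
  have s1 := down_sum hne1 hmin2
  have s2 := up_sum hne2
  have hcp := Multiset.card_pos.2 hne1
  rw [← sum_rep r1 _ hk] at hodd
  generalize Multiset.card m1 = k at *
  obtain ⟨k, rfl⟩ : ∃ k', k = k' + 1 := ⟨k - 1, by omega⟩
  simp only [Nat.add_sub_cancel] at *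
  have hcorner : f2 0 < f1 k := by omega
  set g1 : ℕ → ℕ := fun i => if i = k then f1 i - 1 else f1 i with hg1
  set g2 : ℕ → ℕ := fun i => if i = 0 then f2 0 + 1 else f2 i with hg2
  have G1k : g1 k + 1 = f1 k := by simp [hg1]; omega
  have G1 : ∀ i, i ≠ k → g1 i = f1 i := fun i hi => by simp [hg1, hi]
  have G2z : g2 0 = f2 0 + 1 := by simp [hg2]
  have G2 : ∀ i, i ≠ 0 → g2 i = f2 i := fun i hi => by simp [hg2, hi]
  clear_value g1 g2
  have T1 : ∀ j, j ≤ k → SS g1 j = SS f1 j := fun j hj => SS_congr j (fun i hi => G1 i (by omega))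
  have T1k : SS g1 (k+1) + 1 = SS f1 (k+1) := by
    rw [SS_succ, SS_succ, T1 k le_rfl]; omega
  have T2 : ∀ j, SS g2 (j+1) = SS f2 (j+1) + 1 := by
    intro j
    induction j with
    | zero => rw [SS_succ, SS_succ, SS_zero, SS_zero]; omega
    | succ j ih => rw [SS_succ, SS_succ f2, ih, G2 (j+1) (by omega)]; omega
  have hev : Even (SS g1 (k+1) + eps X * (k+1)) := by
    rw [← T1k, show SS g1 (k+1) + 1 + eps X * (k+1) = SS g1 (k+1) + eps X * (k+1) + 1 by ring,
      Nat.odd_add_one, Nat.not_odd_iff_even] at hodd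
    exact hodd
  have Ck : cat (k+1) f1 f2 k = f1 k := by simp [cat]
  have Ck1 : cat (k+1) f1 f2 (k+1) = f2 0 := cat_add (k+1) f1 f2 0
  have Dk : dd (eps X) (cat (k+1) f1 f2) (k+1) = 1 := by
    rw [dd_eq_one, SS_cat_le _ _ _ _ le_rfl]
    refine ⟨hodd, Or.inl ?_⟩
    simp only [Nat.add_sub_cancel, Ck, Ck1]
    exact hcorner
  have Dk' : dd (eps X) g1 (k+1) = 0 := by
    rw [dd_eq_zero]; rintro ⟨h, -⟩
    exact absurd hev (Nat.not_even_iff_odd.2 h)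
  refine core hY hZ u1 u2 r (by rw [Multiset.sum_add]; omega) (k := k+1)
    (by rw [G1 (k+1) (by omega)]; exact hk) hev ?_ ?_ hdef
  · intro j hj
    rcases Nat.lt_or_ge k j with hjk | hjk
    · have : j = k+1 := by omega
      subst this
      rw [Dk, Dk', SS_cat_le _ _ _ _ le_rfl]; omega
    rw [SS_cat_le _ _ _ _ hj, T1 j hjk]
    congr 1
    apply dd_congr
    · rw [SS_cat_le _ _ _ _ hj, T1 j hjk]
    · intro ho
      rcases Nat.lt_or_ge j k with hlt | hge
      · rw [G1 j (by omega), G1 (j-1) (by omega)]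
        simp [cat, show j < k+1 by omega, show j - 1 < k+1 by omega]
      · have : j = k := by omega
        subst this
        have hj0 : j ≠ 0 := by
          rintro rfl
          simp [SS_zero] at ho
        have e1 := r1.anti (show j - 1 ≤ j by omega)
        have e2 := G1 (j-1) (by omega)
        have ev : Even (f1 j + eps X) := by
          rw [tau_succ, Nat.odd_add] at hodd
          rw [T1 j le_rfl] at ho
          exact hodd.1 ho
        rw [Ck]
        constructor
        · intro _; exact Or.inr ev
        · intro _; left; omega
  · intro j
    cases j with
    | zero =>
      rw [SS_cat_add, add_zero, Dk, SS_zero, SS_zero, dd_zero]; omega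
    | succ j =>
      have e0 : dd (eps X) g2 (j+1) = dd (eps X) (cat (k+1) f1 f2) (k+1+(j+1)) := by
        have hpar : Odd (SS g2 (j+1) + eps X * (j+1)) ↔
            Odd (SS (cat (k+1) f1 f2) (k+1 + (j+1)) + eps X * (k+1 + (j+1))) := by
          rw [SS_cat_add, show SS f1 (k+1) + SS f2 (j+1) + eps X * (k+1 + (j+1)) =
            (SS f2 (j+1) + eps X * (j+1)) + (SS f1 (k+1) + eps X * (k+1)) by ring, T2,
            show SS f2 (j+1) + 1 + eps X * (j+1) = SS f2 (j+1) + eps X * (j+1) + 1 by ring,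
            Nat.odd_add_one, Nat.odd_add (m := SS f2 (j+1) + eps X * (j+1)),
            ← Nat.not_odd_iff_even (n := SS f1 (k+1) + eps X * (k+1))]
          generalize SS f2 (j+1) + eps X * (j+1) = y
          tauto
        apply dd_congr hpar
        intro ho
        rw [cat_add, show k+1 + (j+1) - 1 = k+1 + j by omega, cat_add, Nat.add_sub_cancel]
        cases j with
        | zero =>
          have e1 := r2.anti (show 0 ≤ 1 by omega)
          have e2 := G2 1 (by omega)
          simp only [zero_add] at *
          have ev : Even (f2 0 + eps X) := by
            rw [show (1:ℕ) = 0 + 1 from rfl, tau_succ, SS_zero, G2z] at ho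
            rw [show 0 + eps X * 0 + (f2 0 + 1 + eps X) = f2 0 + eps X + 1 by ring,
              Nat.odd_add_one, Nat.not_odd_iff_even] at ho
            exact ho
          constructor
          · intro _
            rcases Nat.lt_or_ge (f2 1) (f2 0) with h | h
            · exact Or.inl h
            · right; rwa [show f2 1 = f2 0 by omega]
          · intro _; left; omega
        | succ j => rw [G2 (j+1+1) (by omega), G2 (j+1) (by omega)]
      rw [e0, SS_cat_add, T2]
      omega

/-- Lemma 3.1 of the paper (the twelve union identities): collapses of a union
`μ = μ' ∪ μ''` in terms of collapses of the pieces. -/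
theorem collapse_of_union (m1 m2 mu : Ptn) (k p : ℕ)
    (h1 : IsPartition m1) (h2 : IsPartition m2) (hne1 : m1 ≠ 0) (hne2 : m2 ≠ 0)
    (hmu : mu = m1 + m2) (hk : k = Multiset.card m1) (hp : p = m1.sum)
    (hsup : Superior m1 m2) :
    -- k even, p even
    (Even k → Even p → CollapseDefined PType.B mu →
      CollapseDefined PType.D m1 ∧ CollapseDefined PType.B m2 ∧
      collapse PType.B mu = collapse PType.D m1 + collapse PType.B m2) ∧
    (Even k → Even p → CollapseDefined PType.C mu →
      CollapseDefined PType.C m1 ∧ CollapseDefined PType.C m2 ∧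
      collapse PType.C mu = collapse PType.C m1 + collapse PType.C m2) ∧
    (Even k → Even p → CollapseDefined PType.D mu →
      CollapseDefined PType.D m1 ∧ CollapseDefined PType.D m2 ∧
      collapse PType.D mu = collapse PType.D m1 + collapse PType.D m2) ∧
    -- k even, p odd
    (Even k → Odd p → Superior m1 (up m2) → CollapseDefined PType.B mu →
      CollapseDefined PType.D (down m1) ∧ CollapseDefined PType.B (up m2) ∧
      collapse PType.B mu = collapse PType.D (down m1) + collapse PType.B (up m2)) ∧
    (Even k → Odd p → Superior m1 (up m2) → CollapseDefined PType.C mu →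
      CollapseDefined PType.C (down m1) ∧ CollapseDefined PType.C (up m2) ∧
      collapse PType.C mu = collapse PType.C (down m1) + collapse PType.C (up m2)) ∧
    (Even k → Odd p → Superior m1 (up m2) → CollapseDefined PType.D mu →
      CollapseDefined PType.D (down m1) ∧ CollapseDefined PType.D (up m2) ∧
      collapse PType.D mu = collapse PType.D (down m1) + collapse PType.D (up m2)) ∧
    -- k odd, p even
    (Odd k → Even p → Superior m1 (up m2) → CollapseDefined PType.B mu →
      CollapseDefined PType.B (down m1) ∧ CollapseDefined PType.D (up m2) ∧
      collapse PType.B mu = collapse PType.B (down m1) + collapse PType.D (up m2)) ∧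
    (Odd k → Even p → CollapseDefined PType.C mu →
      CollapseDefined PType.C m1 ∧ CollapseDefined PType.C m2 ∧
      collapse PType.C mu = collapse PType.C m1 + collapse PType.C m2) ∧
    (Odd k → Even p → Superior m1 (up m2) → CollapseDefined PType.D mu →
      CollapseDefined PType.B (down m1) ∧ CollapseDefined PType.B (up m2) ∧
      collapse PType.D mu = collapse PType.B (down m1) + collapse PType.B (up m2)) ∧
    -- k odd, p odd
    (Odd k → Odd p → CollapseDefined PType.B mu →
      CollapseDefined PType.B m1 ∧ CollapseDefined PType.D m2 ∧
      collapse PType.B mu = collapse PType.B m1 + collapse PType.D m2) ∧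
    (Odd k → Odd p → Superior m1 (up m2) → CollapseDefined PType.C mu →
      CollapseDefined PType.C (down m1) ∧ CollapseDefined PType.C (up m2) ∧
      collapse PType.C mu = collapse PType.C (down m1) + collapse PType.C (up m2)) ∧
    (Odd k → Odd p → CollapseDefined PType.D mu →
      CollapseDefined PType.B m1 ∧ CollapseDefined PType.B m2 ∧
      collapse PType.D mu = collapse PType.B m1 + collapse PType.B m2) := by
  subst hmu hk hp
  have e1 : ∀ {a b : ℕ}, Even a → Even b → Even (b + 1 * a) := fun h h' => by
    rw [one_mul]; exact h'.add h
  have e2 : ∀ {a b : ℕ}, Odd a → Odd b → Even (b + 1 * a) := fun h h' => by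
    rw [one_mul]; exact h'.add_odd h
  have e3 : ∀ {a b : ℕ}, Even a → Odd b → Odd (b + 1 * a) := fun h h' => by
    rw [one_mul]; exact h'.add_even h
  have e4 : ∀ {a b : ℕ}, Odd a → Even b → Odd (b + 1 * a) := fun h h' => by
    rw [one_mul]; exact h'.add_odd h
  have c1 : ∀ {a b : ℕ}, Even b → Even (b + 0 * a) := fun h => by simpa using h
  have c2 : ∀ {a b : ℕ}, Odd b → Odd (b + 0 * a) := fun h => by simpa using h
  refine ⟨?_, ?_, ?_, ?_, ?_, ?_, ?_, ?_, ?_, ?_, ?_, ?_⟩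
  · exact fun k p d => split_case rfl rfl h1 h2 hne1 hne2 hsup (e1 k p) d
  · exact fun k p d => split_case rfl rfl h1 h2 hne1 hne2 hsup (c1 p) d
  · exact fun k p d => split_case rfl rfl h1 h2 hne1 hne2 hsup (e1 k p) d
  · exact fun k p s d => move_case rfl rfl h1 h2 hne1 hne2 hsup s (e3 k p) d
  · exact fun k p s d => move_case rfl rfl h1 h2 hne1 hne2 hsup s (c2 p) d
  · exact fun k p s d => move_case rfl rfl h1 h2 hne1 hne2 hsup s (e3 k p) d
  · exact fun k p s d => move_case rfl rfl h1 h2 hne1 hne2 hsup s (e4 k p) d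
  · exact fun k p d => split_case rfl rfl h1 h2 hne1 hne2 hsup (c1 p) d
  · exact fun k p s d => move_case rfl rfl h1 h2 hne1 hne2 hsup s (e4 k p) d
  · exact fun k p d => split_case rfl rfl h1 h2 hne1 hne2 hsup (e2 k p) d
  · exact fun k p s d => move_case rfl rfl h1 h2 hne1 hne2 hsup s (c2 p) d
  · exact fun k p d => split_case rfl rfl h1 h2 hne1 hne2 hsup (e2 k p) d

end NilDual
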